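/- arXiv:2511.07029 — 4 statements merged into one kernel-verified Lean document; each statement's English description precedes it below -/
import Mathlib

section
/- Let E be a real inner product space, let (u_ν)_{ν ∈ Fin K} be an orthonormal family in E, let p ∈ E with ‖p‖ ≤ 1, let ν★ ∈ Fin K, and let δ > 0 satisfy ⟨u_{ν★}, p⟩² − ⟨u_ν, p⟩² ≥ δ for all ν ≠ ν★. If Δ ∈ E satisfies 2‖Δ‖ + ‖Δ‖² < δ/2, then ⟨u_{ν★}, p + Δ⟩² > ⟨u_ν, p + Δ⟩² for all ν ≠ ν★. -/
open InnerProductSpace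

/-- Perturbing a point of the unit ball by `Δ` changes its energy along a vector of norm at most
one by at most `2 * ‖Δ‖ + ‖Δ‖ ^ 2`. -/
theorem abs_inner_add_sq_sub_inner_sq_le {E : Type*} [NormedAddCommGroup E]
    [InnerProductSpace ℝ E] {v p : E} (hv : ‖v‖ ≤ 1) (hp : ‖p‖ ≤ 1) (Δ : E) :
    |⟪v, p + Δ⟫_ℝ ^ 2 - ⟪v, p⟫_ℝ ^ 2| ≤ 2 * ‖Δ‖ + ‖Δ‖ ^ 2 := by
  have inner_le (x : E) : |⟪v, x⟫_ℝ| ≤ ‖x‖ :=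
    (abs_real_inner_le_norm v x).trans (mul_le_of_le_one_left (norm_nonneg x) hv)
  have hsum : |2 * ⟪v, p⟫_ℝ + ⟪v, Δ⟫_ℝ| ≤ 2 + ‖Δ‖ := by
    have h₁ := abs_le.mp ((inner_le p).trans hp)
    have h₂ := abs_le.mp (inner_le Δ)
    rw [abs_le]
    constructor <;> linarith
  calc |⟪v, p + Δ⟫_ℝ ^ 2 - ⟪v, p⟫_ℝ ^ 2|
      = |2 * ⟪v, p⟫_ℝ + ⟪v, Δ⟫_ℝ| * |⟪v, Δ⟫_ℝ| := by
        rw [← abs_mul, inner_add_right]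
        ring_nf
    _ ≤ (2 + ‖Δ‖) * ‖Δ‖ := by
        gcongr
        exact inner_le Δ
    _ = 2 * ‖Δ‖ + ‖Δ‖ ^ 2 := by ring

theorem dominant_frequency_stable {E : Type*} [NormedAddCommGroup E]
    [InnerProductSpace ℝ E] (K : ℕ) (u : Fin K → E) (hu : Orthonormal ℝ u)
    (p : E) (hp : ‖p‖ ≤ 1) (νstar : Fin K) (δ : ℝ) (hδ : 0 < δ)
    (hgap : ∀ ν : Fin K, ν ≠ νstar → δ ≤ ⟪u νstar, p⟫_ℝ ^ 2 - ⟪u ν, p⟫_ℝ ^ 2)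
    (Δ : E) (hΔ : 2 * ‖Δ‖ + ‖Δ‖ ^ 2 < δ / 2) :
    ∀ ν : Fin K, ν ≠ νstar →
      ⟪u ν, p + Δ⟫_ℝ ^ 2 < ⟪u νstar, p + Δ⟫_ℝ ^ 2 := by
  intro ν hν
  have hstar := abs_le.mp (abs_inner_add_sq_sub_inner_sq_le (hu.norm_eq_one νstar).le hp Δ)
  have hother := abs_le.mp (abs_inner_add_sq_sub_inner_sq_le (hu.norm_eq_one ν).le hp Δ)
  linarith [hgap ν hν, hstar.1, hother.2]
end

section
/- Let N ≥ 1, let a, t : Fin N → ℝ with a_i ≥ 0 and t_i > 0 for all i, let q ≤ N, and let t_{(1)} ≤ t_{(2)} ≤ ⋯ ≤ t_{(N)} be the values of t sorted in ascending order. If ∑_{i} a_i² < ∑_{j=1}^{q} t_{(j)}², then the number of indices i with a_i ≥ t_i is strictly less than q. -/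
theorem Fin.castLE_le_of_strictMono {q N : ℕ} (hq : q ≤ N) {e : Fin q → Fin N}
    (he : StrictMono e) (j : Fin q) : Fin.castLE hq j ≤ e j := by
  obtain ⟨j, hj⟩ := j
  rw [Fin.le_def]
  induction j with
  | zero => exact Nat.zero_le _
  | succ k ih =>
    have hk : k < q := k.lt_succ_self.trans hj
    have hlt : e ⟨k, hk⟩ < e ⟨k + 1, hj⟩ := he (Fin.mk_lt_mk.2 k.lt_succ_self)
    exact Nat.succ_le_of_lt ((ih hk).trans_lt hlt)

/-- A monotone tuple has its smallest sum over `q` indices on the first `q` of them. -/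
theorem Monotone.sum_castLE_le_sum {M : Type*} [AddCommMonoid M] [PartialOrder M]
    [IsOrderedAddMonoid M] {q N : ℕ} (hq : q ≤ N) {f : Fin N → M} (hf : Monotone f)
    {s : Finset (Fin N)} (hs : s.card = q) :
    ∑ j : Fin q, f (Fin.castLE hq j) ≤ ∑ i ∈ s, f i := by
  calc ∑ j : Fin q, f (Fin.castLE hq j)
      ≤ ∑ j : Fin q, f (s.orderEmbOfFin hs j) :=
        Finset.sum_le_sum fun j _ =>
          hf (Fin.castLE_le_of_strictMono hq (s.orderEmbOfFin hs).strictMono j)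
    _ = ∑ i ∈ s, f i := by
        conv_rhs => rw [← s.map_orderEmbOfFin_univ hs, Finset.sum_map]
        rfl

theorem flipped_points_lt (N : ℕ) (hN : 1 ≤ N) (a t : Fin N → ℝ)
    (ha : ∀ i, 0 ≤ a i) (ht : ∀ i, 0 < t i) (q : ℕ) (hq : q ≤ N)
    (hbudget : ∑ i, a i ^ 2 < ∑ j : Fin q, t (Tuple.sort t (Fin.castLE hq j)) ^ 2) :
    (Finset.univ.filter (fun i : Fin N => t i ≤ a i)).card < q := by
  by_contra! hcard
  obtain ⟨s, hsub, hs⟩ := Finset.exists_subset_card_eq hcard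
  have hmono : Monotone fun i => t (Tuple.sort t i) ^ 2 := fun i j hij =>
    pow_le_pow_left₀ (ht _).le (Tuple.monotone_sort t hij) 2
  refine hbudget.not_ge ?_
  calc ∑ j : Fin q, t (Tuple.sort t (Fin.castLE hq j)) ^ 2
      ≤ ∑ i ∈ s.map (Tuple.sort t).symm.toEmbedding, t (Tuple.sort t i) ^ 2 :=
        hmono.sum_castLE_le_sum hq ((Finset.card_map _).trans hs)
    _ = ∑ i ∈ s, t i ^ 2 := by simp [Finset.sum_map]
    _ ≤ ∑ i ∈ s, a i ^ 2 := Finset.sum_le_sum fun i hi =>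
        pow_le_pow_left₀ (ht i).le (Finset.mem_filter.1 (hsub hi)).2 2
    _ ≤ ∑ i, a i ^ 2 :=
        Finset.sum_le_sum_of_subset_of_nonneg s.subset_univ fun i _ _ => sq_nonneg (a i)
end

section
/- Let N, m, κ ≥ 1 be natural numbers, set α := ⌊(m−1)/2⌋ and p := ⌊α/κ⌋ and assume p + 1 ≤ N. Let t : Fin N → ℝ with t_i > 0, let t_{(1)} ≤ ⋯ ≤ t_{(N)} be its sorted values, let a : Fin N → ℝ with a_i ≥ 0, let M : Fin N → Finset (Fin m) with |M(i)| ≤ κ for all i, let C be a type of labels, v' : Fin m → C, and y ∈ C. Assume: (i) ∑_i a_i² < ∑_{j=1}^{p+1} t_{(j)}²; (ii) for every slice j ∈ Fin m with v'(j) ≠ y there exists i with j ∈ M(i) and a_i ≥ t_i. Then for every label z ≠ y, the number of slices j with v'(j) = y is strictly greater than the number of slices j with v'(j) = z. -/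
theorem Fin.val_le_val_of_strictMono {k N : ℕ} {f : Fin k → Fin N} (hf : StrictMono f)
    (j : Fin k) : (j : ℕ) ≤ f j := by
  obtain ⟨n, hn⟩ := j
  induction n with
  | zero => exact Nat.zero_le _
  | succ n ih =>
    have hlt : f ⟨n, by omega⟩ < f ⟨n + 1, hn⟩ := hf (Fin.mk_lt_mk.2 n.lt_succ_self)
    exact (ih (by omega)).trans_lt hlt

/-- The first `k` values of a monotone tuple have the least sum among all `k`-element subfamilies. -/
theorem Monotone.sum_castLE_le_sum_s10 {k N : ℕ} {g : Fin N → ℝ} (hg : Monotone g) (hk : k ≤ N)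
    (S : Finset (Fin N)) (hS : S.card = k) :
    ∑ j : Fin k, g (Fin.castLE hk j) ≤ ∑ i ∈ S, g i := by
  rw [← S.map_orderEmbOfFin_univ hS, Finset.sum_map]
  exact Finset.sum_le_sum fun j _ =>
    hg (Fin.val_le_val_of_strictMono (S.orderEmbOfFin hS).strictMono j)

/-- A perturbation whose total squared size is below the sum of the `k` smallest squared thresholds
pushes fewer than `k` points past their threshold. -/
theorem card_threshold_le_lt {k N : ℕ} (hk : k ≤ N) {t a : Fin N → ℝ} (ht : ∀ i, 0 ≤ t i)
    (hbudget : ∑ i, a i ^ 2 < ∑ j : Fin k, t (Tuple.sort t (Fin.castLE hk j)) ^ 2) :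
    (Finset.univ.filter fun i => t i ≤ a i).card < k := by
  by_contra! hcard
  obtain ⟨S, hSF, hS⟩ := Finset.exists_subset_card_eq hcard
  have hmono : Monotone fun i => t (Tuple.sort t i) ^ 2 := fun i j hij =>
    pow_le_pow_left₀ (ht _) (Tuple.monotone_sort t hij) 2
  refine hbudget.not_ge ?_
  calc ∑ j : Fin k, t (Tuple.sort t (Fin.castLE hk j)) ^ 2
      ≤ ∑ i ∈ S.map (Tuple.sort t).symm.toEmbedding, t (Tuple.sort t i) ^ 2 :=
        hmono.sum_castLE_le_sum_s10 hk _ (by rw [Finset.card_map, hS])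
    _ = ∑ i ∈ S, t i ^ 2 := by simp [Finset.sum_map]
    _ ≤ ∑ i ∈ S, a i ^ 2 := Finset.sum_le_sum fun i hi =>
        pow_le_pow_left₀ (ht i) (Finset.mem_filter.1 (hSF hi)).2 2
    _ ≤ ∑ i, a i ^ 2 :=
        Finset.sum_le_sum_of_subset_of_nonneg (Finset.subset_univ S) fun i _ _ => sq_nonneg (a i)

theorem certified_l2_majority_robustness (N m κ : ℕ) (hN : 1 ≤ N) (hm : 1 ≤ m)
    (hκ : 1 ≤ κ) (hpN : (m - 1) / 2 / κ + 1 ≤ N)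
    (t : Fin N → ℝ) (ht : ∀ i, 0 < t i)
    (a : Fin N → ℝ) (ha : ∀ i, 0 ≤ a i)
    (M : Fin N → Finset (Fin m)) (hM : ∀ i, (M i).card ≤ κ)
    (C : Type*) [DecidableEq C] (v' : Fin m → C) (y : C)
    (hbudget : ∑ i, a i ^ 2 <
      ∑ j : Fin ((m - 1) / 2 / κ + 1), t (Tuple.sort t (Fin.castLE hpN j)) ^ 2)
    (hflip : ∀ j : Fin m, v' j ≠ y → ∃ i : Fin N, j ∈ M i ∧ t i ≤ a i) :
    ∀ z : C, z ≠ y →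
      (Finset.univ.filter (fun j : Fin m => v' j = z)).card <
        (Finset.univ.filter (fun j : Fin m => v' j = y)).card := by
  intro z hz
  have hF := Nat.lt_succ_iff.1 (card_threshold_le_lt hpN (fun i => (ht i).le) hbudget)
  have hbad : (Finset.univ.filter fun j => v' j ≠ y).card ≤ (m - 1) / 2 := calc
    _ ≤ ((Finset.univ.filter fun i => t i ≤ a i).biUnion M).card := by
        refine Finset.card_le_card fun j hj => ?_
        obtain ⟨i, hji, hi⟩ := hflip j (Finset.mem_filter.1 hj).2
        exact Finset.mem_biUnion.2 ⟨i, by simpa using hi, hji⟩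
    _ ≤ (Finset.univ.filter fun i => t i ≤ a i).card * κ :=
        Finset.card_biUnion_le_card_mul _ _ _ fun i _ => hM i
    _ ≤ (m - 1) / 2 / κ * κ := Nat.mul_le_mul_right κ hF
    _ ≤ (m - 1) / 2 := Nat.div_mul_le_self _ _
  have hz_le : (Finset.univ.filter fun j => v' j = z).card ≤
      (Finset.univ.filter fun j => v' j ≠ y).card :=
    Finset.card_le_card (Finset.monotone_filter_right _ fun j _ hj => hj.trans_ne hz)
  have hsplit : (Finset.univ.filter fun j => v' j = y).card +
      (Finset.univ.filter fun j => v' j ≠ y).card = m := by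
    simpa using Finset.card_filter_add_card_filter_not (s := Finset.univ) (fun j => v' j = y)
  omega
end

section
/- Let N ≥ 1, let t : Fin N → ℝ with t_i > 0 for all i, let q ≤ N, and let t_{(1)} ≤ ⋯ ≤ t_{(N)} be the values of t sorted in ascending order. Then there exists a : Fin N → ℝ with a_i ≥ 0 for all i such that ∑_i a_i² = ∑_{j=1}^{q} t_{(j)}² and the number of indices i with a_i ≥ t_i is exactly q. -/
theorem tightness_of_budget (N : ℕ) (hN : 1 ≤ N) (t : Fin N → ℝ)
    (ht : ∀ i, 0 < t i) (q : ℕ) (hq : q ≤ N) :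
    ∃ a : Fin N → ℝ, (∀ i, 0 ≤ a i) ∧
      ∑ i, a i ^ 2 = ∑ j : Fin q, t (Tuple.sort t (Fin.castLE hq j)) ^ 2 ∧
      (Finset.univ.filter (fun i : Fin N => t i ≤ a i)).card = q := by
  let e : Fin q ↪ Fin N := (Fin.castLEEmb hq).trans (Tuple.sort t).toEmbedding
  let S : Finset (Fin N) := Finset.univ.map e
  refine ⟨fun i => if i ∈ S then t i else 0, fun i => ?_, ?_, ?_⟩
  · dsimp only
    split_ifs
    exacts [(ht i).le, le_rfl]
  · calc ∑ i, (if i ∈ S then t i else 0) ^ 2 = ∑ i ∈ S, t i ^ 2 := by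
          simp [ite_pow, Finset.sum_ite_mem]
      _ = ∑ j : Fin q, t (Tuple.sort t (Fin.castLE hq j)) ^ 2 := Finset.sum_map _ _ _
  · have hS : Finset.univ.filter (fun i => t i ≤ if i ∈ S then t i else 0) = S := by
      ext i
      by_cases hi : i ∈ S <;> simp [hi, ht i]
    rw [hS, Finset.card_map, Finset.card_univ, Fintype.card_fin]
end
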